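/- Let X ∼ N(μ, σ²I_d) with d ≥ 3 and fix v ∈ ℝ^d. Then the James–Stein type estimator X − (d−2)σ²(X − v)/‖X − v‖² satisfies E_μ[‖X − (d−2)σ²(X−v)/‖X−v‖² − μ‖²] = σ²d − (d−2)²σ⁴ E_μ[ 1/‖X − v‖² ] < σ²d. -/

import Mathlib

open MeasureTheory ProbabilityTheory Real Filter

noncomputable def gaussPi (d : ℕ) (m : EuclideanSpace ℝ (Fin d)) (v : ℝ) :
    Measure (EuclideanSpace ℝ (Fin d)) :=
  (Measure.pi fun i : Fin d => gaussianReal (m i) v.toNNReal).map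
    ⇑(EuclideanSpace.equiv (Fin d) ℝ).symm

/-!
Stein's lemma `E[(X i - m i) * f X] = s * E[∂ᵢ f X]` for `X ∼ N(m, s • 1)` only integrates by parts
along lines parallel to the `i`-th axis, so it holds for every `f` that is differentiable on almost
all of these lines. The field `F x = c (x - v) / ‖x - v‖²` is singular at the single point `v`,
which almost every line misses, and its divergence is `c (d - 2) / ‖x - v‖²`. As `d ≥ 3` and the
Gaussian density is bounded, `‖x - v‖⁻²` is integrable. Expanding the square and applying Stein's
lemma to the cross term, the risk of `x - F x` is `s d - c (2 s (d - 2) - c) E[‖X - v‖⁻²]`, which is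
minimal at `c = (d - 2) s`.
-/

open scoped NNReal ENNReal

section PiMeasure

variable {ι : Type*} [Fintype ι] {α : ι → Type*} [∀ i, MeasurableSpace (α i)]

theorem measurePi_mono {μ ν : ∀ i, Measure (α i)} [∀ i, SigmaFinite (μ i)]
    (h : ∀ i, μ i ≤ ν i) : Measure.pi μ ≤ Measure.pi ν := by
  have hbox : (Measure.pi μ).toOuterMeasure ≤ OuterMeasure.pi fun i => (ν i).toOuterMeasure :=
    OuterMeasure.le_pi.2 fun t _ =>
      (Measure.pi_pi μ t).trans_le (Finset.prod_le_prod' fun i _ => h i (t i))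
  refine Measure.le_iff.2 fun s hs => (hbox s).trans_eq ?_
  rw [Measure.pi, toMeasure_apply _ _ hs]

theorem measurePi_smul (c : ι → ℝ≥0) (μ : ∀ i, Measure (α i)) [∀ i, SigmaFinite (μ i)] :
    Measure.pi (fun i => c i • μ i) = (∏ i, c i) • Measure.pi μ := by
  refine Measure.pi_eq fun s _ => ?_
  simp only [Measure.smul_apply, Measure.pi_pi, Algebra.smul_def, map_prod,
    Finset.prod_mul_distrib]

variable [DecidableEq ι] {μ : ∀ i, Measure (α i)} [∀ i, SigmaFinite (μ i)]
  (i : ι) [IsProbabilityMeasure (μ i)]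

theorem measurePreserving_update :
    MeasurePreserving (fun p : α i × (∀ j, α j) => Function.update p.2 i p.1)
      ((μ i).prod (Measure.pi μ)) (Measure.pi μ) := by
  have hmeas : Measurable (fun p : α i × (∀ j, α j) => Function.update p.2 i p.1) := by
    fun_prop
  refine ⟨hmeas, (Measure.pi_eq fun s hs => ?_).symm⟩
  have hpre : (fun p : α i × (∀ j, α j) => Function.update p.2 i p.1) ⁻¹' Set.univ.pi s =
      s i ×ˢ Set.univ.pi (Function.update s i Set.univ) := by
    ext p
    simp only [Set.mem_preimage, Set.mem_prod, Set.mem_univ_pi]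
    rw [Function.forall_update_iff _ fun j y => y ∈ s j,
      Function.forall_update_iff _ fun j t => p.2 j ∈ t]
    simp
  rw [Measure.map_apply hmeas (.univ_pi hs), hpre, Measure.prod_prod, Measure.pi_pi,
    ← Finset.mul_prod_erase _ _ (Finset.mem_univ i),
    ← Finset.mul_prod_erase _ (fun j => μ j (s j)) (Finset.mem_univ i), Function.update_self,
    measure_univ, one_mul]
  congr 1
  refine Finset.prod_congr rfl fun j hj => ?_
  rw [Function.update_of_ne (Finset.ne_of_mem_erase hj)]

variable {E : Type*} [NormedAddCommGroup E] {f : (∀ i, α i) → E}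

theorem integrable_comp_update (hf : Integrable f (Measure.pi μ)) :
    Integrable (fun p : α i × (∀ j, α j) => f (Function.update p.2 i p.1))
      ((μ i).prod (Measure.pi μ)) :=
  ((measurePreserving_update i).integrable_comp hf.1).2 hf

theorem integral_integral_update [NormedSpace ℝ E] (hf : Integrable f (Measure.pi μ)) :
    ∫ x, ∫ t, f (Function.update x i t) ∂μ i ∂Measure.pi μ = ∫ x, f x ∂Measure.pi μ := by
  have hupdate := measurePreserving_update (μ := μ) i
  rw [← integral_prod_symm _ (integrable_comp_update i hf), ← hupdate.map_eq,
    integral_map hupdate.aemeasurable (hupdate.map_eq.symm ▸ hf.1), hupdate.map_eq]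

end PiMeasure

section GaussianReal

variable (μ : ℝ) (V : ℝ≥0)

theorem hasDerivAt_gaussianPDFReal (t : ℝ) :
    HasDerivAt (gaussianPDFReal μ V) (-((t - μ) / V) * gaussianPDFReal μ V t) t := by
  have hexponent : HasDerivAt (fun x : ℝ => -(x - μ) ^ 2 / (2 * V)) (-((t - μ) / V)) t := by
    refine ((((hasDerivAt_id t).sub_const μ).pow 2).neg.div_const (2 * (V : ℝ))).congr_deriv ?_
    simp only [id, Nat.cast_ofNat, Nat.add_one_sub_one, pow_one, mul_one]
    ring
  rw [gaussianPDFReal_def]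
  refine (hexponent.exp.const_mul (√(2 * π * V))⁻¹).congr_deriv ?_
  ring

variable {μ V}

theorem integrable_gaussianReal_iff (hV : V ≠ 0) {f : ℝ → ℝ} :
    Integrable f (gaussianReal μ V) ↔ Integrable (fun t => gaussianPDFReal μ V t * f t) := by
  simp only [gaussianReal_of_var_ne_zero μ hV, integrable_withDensity_iff_integrable_smul'
    (measurable_gaussianPDF μ V) (ae_of_all _ fun _ => gaussianPDF_lt_top), toReal_gaussianPDF,
    smul_eq_mul]

theorem gaussianReal_le_smul_volume (hV : V ≠ 0) :
    gaussianReal μ V ≤ (√(2 * π * V))⁻¹.toNNReal • (volume : Measure ℝ) := by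
  have hpdf : gaussianPDF μ V ≤ fun _ => ENNReal.ofReal (√(2 * π * V))⁻¹ := fun t => by
    refine ENNReal.ofReal_le_ofReal (mul_le_of_le_one_right (by positivity) ?_)
    exact Real.exp_le_one_iff.2 (div_nonpos_of_nonpos_of_nonneg (by nlinarith) (by positivity))
  rw [gaussianReal_of_var_ne_zero μ hV]
  exact (withDensity_mono (ae_of_all _ hpdf)).trans_eq (withDensity_const _)

theorem integral_sub_mean_mul_gaussianReal {g g' : ℝ → ℝ} (hderiv : ∀ t, HasDerivAt g (g' t) t)
    (hg : Integrable g (gaussianReal μ V)) (hg' : Integrable g' (gaussianReal μ V))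
    (hmg : Integrable (fun t => (t - μ) * g t) (gaussianReal μ V)) :
    ∫ t, (t - μ) * g t ∂gaussianReal μ V = V * ∫ t, g' t ∂gaussianReal μ V := by
  obtain rfl | hV := eq_or_ne V 0
  · simp
  have hV' : (V : ℝ) ≠ 0 := NNReal.coe_ne_zero.2 hV
  rw [integrable_gaussianReal_iff hV] at hg hg' hmg
  have hparts := integral_mul_deriv_eq_deriv_mul_of_integrable (u := g) (u' := g')
    (fun t _ => hderiv t) (fun t _ => hasDerivAt_gaussianPDFReal μ V t)
    ((hmg.const_mul (-(V : ℝ)⁻¹)).congr (ae_of_all _ fun t => by simp only [Pi.mul_apply]; ring))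
    (hg'.congr (ae_of_all _ fun t => mul_comm _ _))
    (hg.congr (ae_of_all _ fun t => mul_comm _ _))
  simp only [integral_gaussianReal_eq_integral_smul hV, smul_eq_mul]
  calc ∫ t, gaussianPDFReal μ V t * ((t - μ) * g t)
      = -V * ∫ t, g t * (-((t - μ) / V) * gaussianPDFReal μ V t) := by
        rw [← integral_const_mul]
        congr 1 with t
        field_simp
    _ = V * ∫ t, gaussianPDFReal μ V t * g' t := by
        rw [hparts, neg_mul_neg]
        simp only [mul_comm]

end GaussianReal

theorem integral_sub_mean_mul_pi_gaussianReal {ι : Type*} [Fintype ι] [DecidableEq ι]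
    {m : ι → ℝ} {V : ι → ℝ≥0} (i : ι) {f f' : (ι → ℝ) → ℝ}
    (hderiv : ∀ᵐ x ∂Measure.pi fun j => gaussianReal (m j) (V j), ∀ t,
      HasDerivAt (fun r => f (Function.update x i r)) (f' (Function.update x i t)) t)
    (hf : Integrable f (Measure.pi fun j => gaussianReal (m j) (V j)))
    (hf' : Integrable f' (Measure.pi fun j => gaussianReal (m j) (V j)))
    (hmf : Integrable (fun x => (x i - m i) * f x)
      (Measure.pi fun j => gaussianReal (m j) (V j))) :
    ∫ x, (x i - m i) * f x ∂(Measure.pi fun j => gaussianReal (m j) (V j)) =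
      V i * ∫ x, f' x ∂(Measure.pi fun j => gaussianReal (m j) (V j)) := by
  rw [← integral_integral_update i hmf, ← integral_integral_update i hf', ← integral_const_mul]
  refine integral_congr_ae ?_
  filter_upwards [hderiv, (integrable_comp_update i hf).prod_left_ae,
    (integrable_comp_update i hf').prod_left_ae, (integrable_comp_update i hmf).prod_left_ae]
    with x hx hfx hfx' hmfx
  simp only [Function.update_self] at hmfx ⊢
  exact integral_sub_mean_mul_gaussianReal hx hfx hfx' hmfx

theorem integrable_norm_sub_rpow_of_le_smul {E : Type*} [NormedAddCommGroup E] [NormedSpace ℝ E]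
    [FiniteDimensional ℝ E] [MeasurableSpace E] [BorelSpace E] {μ ν : Measure E}
    [IsFiniteMeasure μ] [ν.IsAddHaarMeasure] {c : ℝ≥0∞} (hc : c ≠ ∞) (hμ : μ ≤ c • ν) (v : E)
    {p : ℝ} (hp₀ : 0 ≤ p) (hp : p < Module.finrank ℝ E) :
    Integrable (fun x => ‖x - v‖ ^ (-p)) μ := by
  have hball : IntegrableOn (fun x : E => ‖x‖ ^ (-p)) (Metric.ball 0 1) ν :=
    integrableOn_ball_of_norm_le_rpow (C := 1) (by exact_mod_cast hp₀.trans_lt hp) hp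
      (ae_of_all _ fun x => by rw [one_mul, Real.norm_of_nonneg (by positivity)])
      (Measurable.aestronglyMeasurable (by fun_prop))
  have hnear : Integrable ((Metric.ball v 1).indicator fun x => ‖x - v‖ ^ (-p)) μ := by
    refine Integrable.of_measure_le_smul hc hμ ?_
    refine (hball.integrable_indicator Metric.isOpen_ball.measurableSet).comp_sub_right v
      |>.congr (ae_of_all _ fun x => ?_)
    simp [Set.indicator, dist_eq_norm]
  refine (hnear.add (integrable_const 1)).mono' (Measurable.aestronglyMeasurable (by fun_prop))
    (ae_of_all _ fun x => ?_)
  rw [Real.norm_of_nonneg (by positivity)]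
  by_cases hx : x ∈ Metric.ball v 1
  · simp [hx]
  · have hfar : 1 ≤ ‖x - v‖ := by simpa [dist_eq_norm] using hx
    simpa [hx] using Real.rpow_le_one_of_one_le_of_nonpos hfar (neg_nonpos.2 hp₀)

section GaussPi

variable {d : ℕ} (m : EuclideanSpace ℝ (Fin d)) (s : ℝ)

theorem measurePreserving_toLp_gaussPi :
    MeasurePreserving (MeasurableEquiv.toLp 2 (Fin d → ℝ))
      (Measure.pi fun i => gaussianReal (m i) s.toNNReal) (gaussPi d m s) :=
  ⟨MeasurableEquiv.measurable _, rfl⟩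

instance isProbabilityMeasure_gaussPi : IsProbabilityMeasure (gaussPi d m s) :=
  Measure.isProbabilityMeasure_map (measurePreserving_toLp_gaussPi m s).aemeasurable

theorem measurePreserving_eval_gaussPi (i : Fin d) :
    MeasurePreserving (fun x : EuclideanSpace ℝ (Fin d) => x i) (gaussPi d m s)
      (gaussianReal (m i) s.toNNReal) :=
  (measurePreserving_eval (fun j => gaussianReal (m j) s.toNNReal) i).comp
    (measurePreserving_toLp_gaussPi m s).symm

theorem memLp_eval_sub_mean_gaussPi (i : Fin d) :
    MemLp (fun x : EuclideanSpace ℝ (Fin d) => x i - m i) 2 (gaussPi d m s) :=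
  ((memLp_id_gaussianReal 2).comp_measurePreserving (measurePreserving_eval_gaussPi m s i)).sub
    (memLp_const _)

theorem memLp_sub_mean_gaussPi : MemLp (fun x => x - m) 2 (gaussPi d m s) :=
  MemLp.of_eval_piLp (memLp_eval_sub_mean_gaussPi m s)

variable {m s}

theorem integral_eval_sub_mean_sq_gaussPi (hs : 0 ≤ s) (i : Fin d) :
    ∫ x, (x i - m i) ^ 2 ∂gaussPi d m s = s := by
  have heval := measurePreserving_eval_gaussPi m s i
  have hvar : Var[id; gaussianReal (m i) s.toNNReal] = s := by
    rw [variance_id_gaussianReal, Real.coe_toNNReal s hs]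
  rw [variance_eq_integral aemeasurable_id] at hvar
  simp only [id, integral_id_gaussianReal] at hvar
  rwa [← heval.map_eq, integral_map heval.aemeasurable (by fun_prop)] at hvar

theorem integral_norm_sub_mean_sq_gaussPi (hs : 0 ≤ s) :
    ∫ x, ‖x - m‖ ^ 2 ∂gaussPi d m s = s * d := by
  simp only [EuclideanSpace.real_norm_sq_eq, PiLp.sub_apply]
  rw [integral_finsetSum _ fun i _ => (memLp_eval_sub_mean_gaussPi m s i).integrable_sq]
  simp [integral_eval_sub_mean_sq_gaussPi hs, mul_comm]

theorem gaussPi_le_smul_volume (hs : 0 < s) :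
    gaussPi d m s ≤ (√(2 * π * s))⁻¹.toNNReal ^ d •
      (volume : Measure (EuclideanSpace ℝ (Fin d))) := by
  have hV : s.toNNReal ≠ 0 := (Real.toNNReal_pos.2 hs).ne'
  have hpi := measurePi_mono fun i => gaussianReal_le_smul_volume (μ := m i) hV
  rw [measurePi_smul, Finset.prod_const, Finset.card_fin, Real.coe_toNNReal s hs.le] at hpi
  rw [← (measurePreserving_toLp_gaussPi m s).map_eq,
    ← (PiLp.volume_preserving_toLp (Fin d)).map_eq, ← Measure.map_smul]
  exact Measure.map_mono hpi (MeasurableEquiv.measurable _)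

theorem ae_eval_ne_gaussPi (hs : 0 < s) (v : EuclideanSpace ℝ (Fin d)) :
    ∀ᵐ x ∂gaussPi d m s, ∀ i, x i ≠ v i := by
  refine ae_all_iff.2 fun i => ?_
  have := nullSingletonClass_gaussianReal (μ := m i) (Real.toNNReal_pos.2 hs).ne'
  exact (measurePreserving_eval_gaussPi m s i).quasiMeasurePreserving.ae
    (Measure.ae_ne _ (v i))

theorem integrable_inv_norm_sub_sq_gaussPi (hd : 3 ≤ d) (hs : 0 < s)
    (v : EuclideanSpace ℝ (Fin d)) : Integrable (fun x => (‖x - v‖ ^ 2)⁻¹) (gaussPi d m s) := by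
  have hdim : (2 : ℝ) < Module.finrank ℝ (EuclideanSpace ℝ (Fin d)) := by
    rw [finrank_euclideanSpace_fin]
    exact_mod_cast hd
  have hrpow := integrable_norm_sub_rpow_of_le_smul ENNReal.coe_ne_top
    (gaussPi_le_smul_volume (m := m) hs) v zero_le_two hdim
  simpa [Real.rpow_neg] using hrpow

theorem integral_inv_norm_sub_sq_gaussPi_pos (hd : 3 ≤ d) (hs : 0 < s)
    (v : EuclideanSpace ℝ (Fin d)) : 0 < ∫ x, (‖x - v‖ ^ 2)⁻¹ ∂gaussPi d m s := by
  have hne : Function.support (fun x => (‖x - v‖ ^ 2)⁻¹) ∈ ae (gaussPi d m s) := by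
    filter_upwards [ae_eval_ne_gaussPi hs v] with x hx
    have hxv : x ≠ v := fun h => hx ⟨0, by omega⟩ (by rw [h])
    simpa [sub_eq_zero] using hxv
  rw [integral_pos_iff_support_of_nonneg (fun x => by positivity)
    (integrable_inv_norm_sub_sq_gaussPi hd hs v), measure_congr (eventuallyEq_univ.2 hne),
    measure_univ]
  exact one_pos

end GaussPi

section SteinIdentity

/-- Along `μ`-almost every line parallel to the `i`-th axis, `f` is everywhere differentiable with
derivative `f'`. Lines are parametrised by the `μ`-distributed points they pass through, and `f` is
unrestricted on the exceptional ones; this is the regularity that Stein's lemma needs. -/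
def HasPartialDerivOnAELine {ι : Type*} [Fintype ι] [DecidableEq ι]
    (μ : Measure (EuclideanSpace ℝ ι)) (i : ι) (f f' : EuclideanSpace ℝ ι → ℝ) : Prop :=
  ∀ᵐ x ∂μ, ∀ t : ℝ, HasLineDerivAt ℝ f (f' (x + t • EuclideanSpace.single i 1))
    (x + t • EuclideanSpace.single i 1) (EuclideanSpace.single i 1)

theorem toLp_update {ι : Type*} [DecidableEq ι] (x : ι → ℝ) (i : ι) (t : ℝ) :
    WithLp.toLp 2 (Function.update x i t) =
      WithLp.toLp 2 x + (t - x i) • EuclideanSpace.single i (1 : ℝ) := by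
  ext j
  obtain rfl | hj := eq_or_ne j i <;> simp [*]

variable {d : ℕ} {m : EuclideanSpace ℝ (Fin d)} {s : ℝ}

theorem integral_eval_sub_mean_mul_gaussPi (hs : 0 ≤ s) {i : Fin d}
    {f f' : EuclideanSpace ℝ (Fin d) → ℝ} (hderiv : HasPartialDerivOnAELine (gaussPi d m s) i f f')
    (hf : Integrable f (gaussPi d m s)) (hf' : Integrable f' (gaussPi d m s))
    (hmf : Integrable (fun x => (x i - m i) * f x) (gaussPi d m s)) :
    ∫ x, (x i - m i) * f x ∂gaussPi d m s = s * ∫ x, f' x ∂gaussPi d m s := by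
  have hmp := measurePreserving_toLp_gaussPi m s
  have hline : ∀ᵐ x ∂Measure.pi fun j => gaussianReal (m j) s.toNNReal, ∀ t, HasDerivAt
      (fun r => f (WithLp.toLp 2 (Function.update x i r)))
      (f' (WithLp.toLp 2 (Function.update x i t))) t := by
    filter_upwards [hmp.quasiMeasurePreserving.ae hderiv] with x hx t
    have hshift : ∀ r, WithLp.toLp 2 (Function.update x i t) +
        (r - t) • EuclideanSpace.single i (1 : ℝ) = WithLp.toLp 2 (Function.update x i r) :=
      fun r => by simp only [toLp_update]; module
    have hxt := hx (t - x i)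
    simp only [MeasurableEquiv.coe_toLp, ← toLp_update] at hxt
    rw [HasLineDerivAt, ← sub_self t] at hxt
    simpa only [hshift] using hxt.comp_sub_const t t
  have hstein := integral_sub_mean_mul_pi_gaussianReal i hline
    ((hmp.integrable_comp hf.1).2 hf) ((hmp.integrable_comp hf'.1).2 hf')
    ((hmp.integrable_comp hmf.1).2 hmf)
  rw [Real.coe_toNNReal s hs] at hstein
  rw [← hmp.integral_comp', ← hmp.integral_comp']
  exact hstein

variable {F : EuclideanSpace ℝ (Fin d) → EuclideanSpace ℝ (Fin d)}
  {D : Fin d → EuclideanSpace ℝ (Fin d) → ℝ}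

theorem integral_inner_sub_mean_gaussPi (hs : 0 ≤ s)
    (hderiv : ∀ i, HasPartialDerivOnAELine (gaussPi d m s) i (fun x => F x i) (D i))
    (hF : MemLp F 2 (gaussPi d m s)) (hD : ∀ i, Integrable (D i) (gaussPi d m s)) :
    ∫ x, inner ℝ (x - m) (F x) ∂gaussPi d m s = s * ∫ x, ∑ i, D i x ∂gaussPi d m s := by
  have hprod : ∀ i, Integrable (fun x => (x i - m i) * F x i) (gaussPi d m s) := fun i =>
    (memLp_eval_sub_mean_gaussPi m s i).integrable_mul (hF.eval_piLp i)
  calc ∫ x, inner ℝ (x - m) (F x) ∂gaussPi d m s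
      = ∑ i, ∫ x, (x i - m i) * F x i ∂gaussPi d m s := by
        rw [← integral_finsetSum _ fun i _ => hprod i]
        simp only [PiLp.inner_apply, PiLp.sub_apply, RCLike.inner_apply, conj_trivial, mul_comm]
    _ = ∑ i, s * ∫ x, D i x ∂gaussPi d m s :=
        Finset.sum_congr rfl fun i _ => integral_eval_sub_mean_mul_gaussPi hs (hderiv i)
          ((hF.eval_piLp i).integrable one_le_two) (hD i) (hprod i)
    _ = s * ∫ x, ∑ i, D i x ∂gaussPi d m s := by
        rw [integral_finsetSum _ fun i _ => hD i, Finset.mul_sum]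

theorem integral_norm_sub_sub_mean_sq_gaussPi (hs : 0 ≤ s)
    (hderiv : ∀ i, HasPartialDerivOnAELine (gaussPi d m s) i (fun x => F x i) (D i))
    (hF : MemLp F 2 (gaussPi d m s)) (hD : ∀ i, Integrable (D i) (gaussPi d m s)) :
    ∫ x, ‖x - F x - m‖ ^ 2 ∂gaussPi d m s =
      s * d - 2 * s * ∫ x, ∑ i, D i x ∂gaussPi d m s + ∫ x, ‖F x‖ ^ 2 ∂gaussPi d m s := by
  have hnoise := memLp_sub_mean_gaussPi m s
  have hcross : Integrable (fun x => 2 * inner ℝ (x - m) (F x)) (gaussPi d m s) :=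
    ((hnoise.norm.integrable_mul hF.norm).mono' (hnoise.1.inner hF.1)
      (ae_of_all _ fun x => norm_inner_le_norm _ _)).const_mul 2
  have hdiff : Integrable (fun x => ‖x - m‖ ^ 2 - 2 * inner ℝ (x - m) (F x)) (gaussPi d m s) :=
    hnoise.norm.integrable_sq.sub hcross
  calc ∫ x, ‖x - F x - m‖ ^ 2 ∂gaussPi d m s
      = ∫ x, ‖x - m‖ ^ 2 - 2 * inner ℝ (x - m) (F x) + ‖F x‖ ^ 2 ∂gaussPi d m s := by
        simp only [sub_right_comm _ (F _) m, norm_sub_sq_real]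
    _ = ∫ x, ‖x - m‖ ^ 2 ∂gaussPi d m s - 2 * ∫ x, inner ℝ (x - m) (F x) ∂gaussPi d m s +
          ∫ x, ‖F x‖ ^ 2 ∂gaussPi d m s := by
        rw [integral_add hdiff hF.norm.integrable_sq,
          integral_sub hnoise.norm.integrable_sq hcross, integral_const_mul]
    _ = _ := by
        rw [integral_norm_sub_mean_sq_gaussPi hs, integral_inner_sub_mean_gaussPi hs hderiv hF hD]
        ring

end SteinIdentity

section JamesStein

variable {ι : Type*} [Fintype ι]

/-- The James–Stein correction, which is subtracted from an observation `x` to shrink it toward `v`.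
At `x = v` it is `0`, since `c / 0 = 0`. -/
noncomputable def steinShift (c : ℝ) (v x : EuclideanSpace ℝ ι) : EuclideanSpace ℝ ι :=
  (c / ‖x - v‖ ^ 2) • (x - v)

/-- The `i`-th partial derivative of the `i`-th coordinate of `steinShift c v`; the sum over `i` is
the divergence. Its value at `x = v` is the junk `0`. -/
noncomputable def steinShiftPartial (c : ℝ) (v : EuclideanSpace ℝ ι) (i : ι)
    (x : EuclideanSpace ℝ ι) : ℝ :=
  c * ((‖x - v‖ ^ 2)⁻¹ - 2 * (x i - v i) ^ 2 * ((‖x - v‖ ^ 2)⁻¹) ^ 2)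

theorem norm_steinShift_sq (c : ℝ) (v x : EuclideanSpace ℝ ι) :
    ‖steinShift c v x‖ ^ 2 = c ^ 2 * (‖x - v‖ ^ 2)⁻¹ := by
  rw [steinShift, norm_smul, mul_pow, Real.norm_eq_abs, sq_abs]
  obtain h | h := eq_or_ne ‖x - v‖ 0
  · simp [h]
  · field_simp

theorem hasLineDerivAt_steinShift [DecidableEq ι] (c : ℝ) {v x : EuclideanSpace ℝ ι} (hx : x ≠ v)
    (i : ι) :
    HasLineDerivAt ℝ (fun y => steinShift c v y i) (steinShiftPartial c v i x) x
      (EuclideanSpace.single i 1) := by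
  have hline : HasDerivAt (fun t : ℝ => x + t • EuclideanSpace.single i (1 : ℝ) - v)
      (EuclideanSpace.single i 1) 0 := by
    simpa using (((hasDerivAt_id (0 : ℝ)).smul_const _).const_add x).sub_const v
  have hcoord : HasDerivAt (fun t : ℝ => x i + t - v i) 1 0 :=
    ((hasDerivAt_id (0 : ℝ)).const_add (x i)).sub_const (v i)
  have hne : ‖x - v‖ ≠ 0 := norm_ne_zero_iff.2 (sub_ne_zero.2 hx)
  have hquot := (hcoord.const_mul c).div hline.norm_sq (by simpa using hne)
  simp only [HasLineDerivAt, steinShift, steinShiftPartial, PiLp.smul_apply, PiLp.sub_apply,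
    PiLp.add_apply]
  refine (hquot.congr_deriv ?_).congr_of_eventuallyEq (.of_forall fun t => ?_)
  · simp only [mul_one, zero_smul, add_zero, EuclideanSpace.inner_single_right, PiLp.sub_apply,
      conj_trivial, one_mul, inv_pow]
    field_simp
  · simp only [PiLp.single_eq_same, smul_eq_mul, mul_one, Pi.div_apply]
    ring

theorem hasPartialDerivOnAELine_steinShift [DecidableEq ι] (c : ℝ) {v : EuclideanSpace ℝ ι}
    [Nontrivial ι] {μ : Measure (EuclideanSpace ℝ ι)} (hμ : ∀ᵐ x ∂μ, ∀ i, x i ≠ v i) (i : ι) :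
    HasPartialDerivOnAELine μ i (fun x => steinShift c v x i) (steinShiftPartial c v i) := by
  filter_upwards [hμ] with x hx t
  obtain ⟨j, hji⟩ := exists_ne i
  refine hasLineDerivAt_steinShift c (fun h => hx j ?_) i
  simpa [hji] using congrArg (· j) h

theorem sum_steinShiftPartial (c : ℝ) (v x : EuclideanSpace ℝ ι) :
    ∑ i, steinShiftPartial c v i x = c * (Fintype.card ι - 2) * (‖x - v‖ ^ 2)⁻¹ := by
  have hnorm : ∑ i, (x i - v i) ^ 2 = ‖x - v‖ ^ 2 := by
    simp [EuclideanSpace.real_norm_sq_eq]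
  simp only [steinShiftPartial, ← Finset.mul_sum, Finset.sum_sub_distrib, ← Finset.sum_mul, hnorm,
    Finset.sum_const, Finset.card_univ, nsmul_eq_mul]
  obtain h | h := eq_or_ne ‖x - v‖ 0
  · simp [h]
  · field_simp

theorem abs_steinShiftPartial_le (c : ℝ) (v x : EuclideanSpace ℝ ι) (i : ι) :
    |steinShiftPartial c v i x| ≤ |c| * (‖x - v‖ ^ 2)⁻¹ := by
  have hcoord : (x i - v i) ^ 2 ≤ ‖x - v‖ ^ 2 := by
    simpa using pow_le_pow_left₀ (norm_nonneg _) (PiLp.norm_apply_le (x - v) i) 2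
  have hratio : (x i - v i) ^ 2 * (‖x - v‖ ^ 2)⁻¹ ≤ 1 :=
    mul_inv_le_one_of_le₀ hcoord (by positivity)
  have hratio₀ : 0 ≤ (x i - v i) ^ 2 * (‖x - v‖ ^ 2)⁻¹ := by positivity
  have hfactor : steinShiftPartial c v i x =
      c * ((1 - 2 * ((x i - v i) ^ 2 * (‖x - v‖ ^ 2)⁻¹)) * (‖x - v‖ ^ 2)⁻¹) := by
    rw [steinShiftPartial]
    ring
  calc |steinShiftPartial c v i x|
      = |c| * (|1 - 2 * ((x i - v i) ^ 2 * (‖x - v‖ ^ 2)⁻¹)| * (‖x - v‖ ^ 2)⁻¹) := by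
        rw [hfactor, abs_mul, abs_mul, abs_of_nonneg (a := (‖x - v‖ ^ 2)⁻¹) (by positivity)]
    _ ≤ |c| * (1 * (‖x - v‖ ^ 2)⁻¹) := by
        gcongr
        exact abs_le.2 ⟨by linarith, by linarith⟩
    _ = |c| * (‖x - v‖ ^ 2)⁻¹ := by rw [one_mul]

theorem measurable_steinShift (c : ℝ) (v : EuclideanSpace ℝ ι) : Measurable (steinShift c v) := by
  unfold steinShift
  fun_prop

theorem measurable_steinShiftPartial (c : ℝ) (v : EuclideanSpace ℝ ι) (i : ι) :
    Measurable (steinShiftPartial c v i) := by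
  unfold steinShiftPartial
  fun_prop

theorem integral_norm_sub_steinShift_sub_mean_sq_gaussPi {d : ℕ} (hd : 3 ≤ d) {s : ℝ} (hs : 0 < s)
    (c : ℝ) (m v : EuclideanSpace ℝ (Fin d)) :
    ∫ x, ‖x - steinShift c v x - m‖ ^ 2 ∂gaussPi d m s =
      s * d - c * (2 * s * (d - 2) - c) * ∫ x, (‖x - v‖ ^ 2)⁻¹ ∂gaussPi d m s := by
  have : Nontrivial (Fin d) := Fin.nontrivial_iff_two_le.2 (by omega)
  have hinv := integrable_inv_norm_sub_sq_gaussPi (m := m) hd hs v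
  have hshift : MemLp (steinShift c v) 2 (gaussPi d m s) := by
    rw [memLp_two_iff_integrable_sq_norm (measurable_steinShift c v).aestronglyMeasurable]
    simpa only [norm_steinShift_sq] using hinv.const_mul (c ^ 2)
  have hpartial : ∀ i, Integrable (steinShiftPartial c v i) (gaussPi d m s) := fun i =>
    (hinv.const_mul |c|).mono' (measurable_steinShiftPartial c v i).aestronglyMeasurable
      (ae_of_all _ fun x => abs_steinShiftPartial_le c v x i)
  rw [integral_norm_sub_sub_mean_sq_gaussPi hs.le
    (hasPartialDerivOnAELine_steinShift c (ae_eval_ne_gaussPi hs v)) hshift hpartial]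
  simp only [sum_steinShiftPartial, norm_steinShift_sq, integral_const_mul, Fintype.card_fin]
  ring

end JamesStein

/-- James–Stein type estimator: for `X ∼ N(μ, σ²I_d)` with `d ≥ 3` and any
`v ∈ ℝ^d`, the estimator `X − (d−2)σ²(X−v)/‖X−v‖²` has risk
`σ²d − (d−2)²σ⁴ E_μ[1/‖X−v‖²]`, which is strictly smaller than `σ²d`. -/
theorem james_stein_risk
    (d : ℕ) (hd : 3 ≤ d) (m v : EuclideanSpace ℝ (Fin d)) (σ : ℝ) (hσ : 0 < σ) :
    (∫ x, ‖x - (((d : ℝ) - 2) * σ ^ 2 / ‖x - v‖ ^ 2) • (x - v) - m‖ ^ 2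
          ∂(gaussPi d m (σ ^ 2)) =
        σ ^ 2 * d -
          ((d : ℝ) - 2) ^ 2 * σ ^ 4 *
            ∫ x, (‖x - v‖ ^ 2)⁻¹ ∂(gaussPi d m (σ ^ 2))) ∧
    (∫ x, ‖x - (((d : ℝ) - 2) * σ ^ 2 / ‖x - v‖ ^ 2) • (x - v) - m‖ ^ 2
          ∂(gaussPi d m (σ ^ 2)) < σ ^ 2 * d) := by
  have hσ2 : 0 < σ ^ 2 := by positivity
  have hrisk := integral_norm_sub_steinShift_sub_mean_sq_gaussPi hd hσ2 ((d - 2) * σ ^ 2) m v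
  simp only [steinShift] at hrisk
  have hd2 : (0 : ℝ) < d - 2 := sub_pos.2 (by exact_mod_cast hd)
  have hgain : 0 < ((d : ℝ) - 2) ^ 2 * σ ^ 4 * ∫ x, (‖x - v‖ ^ 2)⁻¹ ∂gaussPi d m (σ ^ 2) :=
    mul_pos (by positivity) (integral_inv_norm_sub_sq_gaussPi_pos hd hσ2 v)
  rw [hrisk]
  constructor <;> linarith
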